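/- Let k ∈ ℕ ∪ {0} and let E be a measurable space. For each 0 ≤ j ≤ k, let T_j : E → E be a measurable map whose range contains at most 2^j points. Then every probability measure μ on E can be decomposed as μ = (1/2^k)·λ^{(0)} + ∑_{j=1}^{k} (1/2^{k−j+1})·λ^{(j)} for some probability measures λ^{(0)},…,λ^{(k)} on E such that (T_j)_#λ^{(j)} ∈ 𝒰(E, 2^j) for every 0 ≤ j ≤ k. -/

import Mathlib

open MeasureTheory ENNReal

noncomputable section

/-- The (uniform) discrete measure `(1/r) ∑ δ_{x i}`; the set `𝒰(E, r)` of the paper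
consists of all measures of this form. -/
def empiricalMeasure {E : Type*} [MeasurableSpace E] (r : ℕ) (x : Fin r → E) :
    Measure E :=
  (r : ℝ≥0∞)⁻¹ • ∑ i, Measure.dirac (x i)

end

/-- A measurable map with finite range, up to measure-theoretically indistinguishable points. -/
lemma aux_rep {E : Type*} [MeasurableSpace E] (T : E → E) (hT : Measurable T) (N : ℕ)
    (hf : (Set.range T).Finite) (hc : (Set.range T).ncard ≤ N) :
    ∃ (S : Finset E) (g : E → E), S.card ≤ N ∧ (∀ x, g x ∈ S) ∧
      (∀ s, MeasurableSet (g ⁻¹' {s})) ∧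
      ∀ x, ∀ B, MeasurableSet B → (T x ∈ B ↔ g x ∈ B) := by
  classical
  let st : Setoid E :=
    { r := fun x y => ∀ B, MeasurableSet B → (x ∈ B ↔ y ∈ B)
      iseqv := ⟨fun x B _ => Iff.rfl, fun h B hB => (h B hB).symm,
        fun h1 h2 B hB => (h1 B hB).trans (h2 B hB)⟩ }
  let rep : E → E := fun x => (Quotient.mk st x).out
  have hrep : ∀ x, ∀ B, MeasurableSet B → (rep x ∈ B ↔ x ∈ B) := fun x =>
    Quotient.exact (s := st) (Quotient.out_eq (Quotient.mk st x))
  have hrep2 : ∀ x y, (∀ B, MeasurableSet B → (x ∈ B ↔ y ∈ B)) → rep x = rep y := by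
    intro x y h
    have : Quotient.mk st x = Quotient.mk st y := Quotient.sound (s := st) h
    simp only [rep, this]
  refine ⟨hf.toFinset.image rep, fun x => rep (T x), ?_, ?_, ?_, ?_⟩
  · refine Finset.card_image_le.trans ?_
    rwa [← Set.ncard_eq_toFinset_card _ hf]
  · intro x
    exact Finset.mem_image_of_mem _ (by simp)
  · intro s
    have key : ∀ z, rep z ≠ s → (∃ y, rep y = s) →
        ∃ B, MeasurableSet B ∧ s ∈ B ∧ z ∉ B := by
      rintro z hz ⟨y, rfl⟩
      by_contra hcon
      push Not at hcon
      apply hz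
      apply hrep2
      intro B hB
      rw [← hrep y B hB]
      constructor
      · intro h
        by_contra h'
        exact hcon Bᶜ hB.compl h' h
      · exact hcon B hB
    by_cases hy : ∃ y, rep y = s
    · have key' : ∀ z, ∃ B, MeasurableSet B ∧ s ∈ B ∧ (rep z ≠ s → z ∉ B) := by
        intro z
        by_cases hz : rep z = s
        · exact ⟨Set.univ, MeasurableSet.univ, trivial, fun h => absurd hz h⟩
        · obtain ⟨B, h1, h2, h3⟩ := key z hz hy
          exact ⟨B, h1, h2, fun _ => h3⟩
      choose B hB hsB hzB using key'
      have : (fun x => rep (T x)) ⁻¹' {s} = T ⁻¹' (⋂ z ∈ Set.range T, B z) := by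
        ext x
        simp only [Set.mem_preimage, Set.mem_singleton_iff, Set.mem_iInter]
        constructor
        · intro h z _
          rw [← hrep _ _ (hB z), h]
          exact hsB z
        · intro h
          by_contra h'
          exact hzB (T x) h' (h (T x) ⟨x, rfl⟩)
      rw [this]
      exact hT (MeasurableSet.biInter hf.countable fun z _ => hB z)
    · have : (fun x => rep (T x)) ⁻¹' {s} = ∅ := by
        ext x
        simp only [Set.mem_preimage, Set.mem_singleton_iff, Set.mem_empty_iff_false, iff_false]
        exact fun h => hy ⟨_, h⟩
      rw [this]
      exact MeasurableSet.empty
  · intro x B hB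
    exact (hrep (T x) B hB).symm

lemma aux_choose {E : Type*} (S : Finset E) (f : E → ℕ) :
    ∀ n ≤ ∑ s ∈ S, f s, ∃ m : E → ℕ, (∀ s ∈ S, m s ≤ f s) ∧ ∑ s ∈ S, m s = n := by
  classical
  induction S using Finset.induction_on with
  | empty => intro n hn; exact ⟨fun _ => 0, by simp, by simp at hn; simp [hn]⟩
  | insert a S ha ih =>
    intro n hn
    rw [Finset.sum_insert ha] at hn
    obtain ⟨m, hm, hs⟩ := ih (n - min n (f a)) (by omega)
    refine ⟨Function.update m a (min n (f a)), ?_, ?_⟩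
    · intro s hs'
      by_cases h : s = a
      · subst h; simp
      · rw [Function.update_of_ne h]
        exact hm s ((Finset.mem_insert.1 hs').resolve_left h)
    · rw [Finset.sum_insert ha, Function.update_self,
        Finset.sum_congr rfl (g := m), hs]
      · omega
      · intro s hs'
        rw [Function.update_of_ne]
        rintro rfl
        exact ha hs'

lemma aux_floor {E : Type*} (S : Finset E) (N : ℕ) (hS : S.card ≤ N)
    (p : E → ℝ≥0∞) (hp : ∑ s ∈ S, p s = 1) :
    ∃ m : E → ℕ, (∀ s ∈ S, (m s : ℝ≥0∞) ≤ 2 * N * p s) ∧ ∑ s ∈ S, m s = N := by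
  have hfin : ∀ s ∈ S, p s ≠ ∞ := by
    intro s hs h
    have := Finset.single_le_sum (f := p) (fun _ _ => zero_le) hs
    rw [hp, h] at this
    simp at this
  have hreal : ∑ s ∈ S, (p s).toReal = 1 := by
    rw [← ENNReal.toReal_sum hfin, hp]; simp
  have hle : N ≤ ∑ s ∈ S, ⌊2 * N * (p s).toReal⌋₊ := by
    have h1 : ∑ s ∈ S, (2 * N * (p s).toReal) ≤
        ∑ s ∈ S, ((⌊2 * N * (p s).toReal⌋₊ : ℝ) + 1) :=
      Finset.sum_le_sum fun s _ => (Nat.lt_floor_add_one _).le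
    rw [← Finset.mul_sum, hreal, Finset.sum_add_distrib] at h1
    simp only [Finset.sum_const, nsmul_eq_mul, mul_one] at h1
    have h2 : (S.card : ℝ) ≤ N := by exact_mod_cast hS
    have h3 : (N : ℝ) ≤ ((∑ s ∈ S, ⌊2 * N * (p s).toReal⌋₊ : ℕ) : ℝ) := by
      push_cast
      linarith
    exact_mod_cast h3
  obtain ⟨m, hm, hs⟩ := aux_choose S _ N hle
  refine ⟨m, fun s hsS => ?_, hs⟩
  have h1 : (m s : ℝ) ≤ 2 * N * (p s).toReal :=
    (Nat.cast_le.2 (hm s hsS)).trans (Nat.floor_le (by positivity))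
  have h2 := ENNReal.ofReal_le_ofReal h1
  rw [ENNReal.ofReal_natCast, ENNReal.ofReal_mul (by positivity),
    ENNReal.ofReal_mul (by positivity), ENNReal.ofReal_toReal (hfin s hsS)] at h2
  simpa using h2

lemma aux_points {E : Type*} [MeasurableSpace E] (S : Finset E) (N : ℕ) (m : E → ℕ)
    (hm : ∑ s ∈ S, m s = N) :
    ∃ x : Fin N → E, ∑ i, Measure.dirac (x i) = ∑ s ∈ S, (m s : ℝ≥0∞) • Measure.dirac s := by
  classical
  have hcard : Fintype.card (Σ s : S, Fin (m s)) = N := by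
    rw [Fintype.card_sigma]
    simp only [Fintype.card_fin]
    rw [← hm]
    exact Finset.sum_coe_sort S m
  let e : Fin N ≃ (Σ s : S, Fin (m s)) := (Fintype.equivFinOfCardEq hcard).symm
  refine ⟨fun i => ((e i).1 : E), ?_⟩
  rw [Equiv.sum_comp e (fun y => Measure.dirac (y.1 : E)), Fintype.sum_sigma]
  simp only [Finset.sum_const, Finset.card_univ, Fintype.card_fin]
  rw [Finset.sum_coe_sort S (fun s => m s • Measure.dirac s)]
  refine Finset.sum_congr rfl fun s _ => ?_
  exact (Nat.cast_smul_eq_nsmul ℝ≥0∞ (m s) (Measure.dirac s)).symm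

lemma aux_step {E : Type*} [MeasurableSpace E] (T : E → E) (hT : Measurable T) (N : ℕ)
    (hN : N ≠ 0)
    (hf : (Set.range T).Finite) (hc : (Set.range T).ncard ≤ N)
    (μ : Measure E) [IsProbabilityMeasure μ] :
    ∃ lam rho : Measure E, IsProbabilityMeasure lam ∧ IsProbabilityMeasure rho ∧
      μ = (2 : ℝ≥0∞)⁻¹ • lam + (2 : ℝ≥0∞)⁻¹ • rho ∧
      ∃ x : Fin N → E, lam.map T = empiricalMeasure N x := by
  classical
  obtain ⟨S, g, hS, hgS, hgm, hgT⟩ := aux_rep T hT N hf hc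
  have hpart : ∀ B, MeasurableSet B → ∑ s ∈ S, μ (B ∩ g ⁻¹' {s}) = μ B := by
    intro B hB
    rw [← measure_biUnion_finset]
    · congr 1
      ext x
      simp only [Set.mem_iUnion, Set.mem_inter_iff, Set.mem_preimage, Set.mem_singleton_iff]
      constructor
      · rintro ⟨s, _, h, _⟩; exact h
      · intro h; exact ⟨g x, hgS x, h, rfl⟩
    · intro s _ t _ hst
      refine Set.disjoint_left.2 ?_
      rintro x ⟨_, h1⟩ ⟨_, h2⟩
      exact hst (h1.symm.trans h2)
    · exact fun s _ => hB.inter (hgm s)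
  obtain ⟨m, hm, hmN⟩ := aux_floor S N hS (fun s => μ (g ⁻¹' {s})) (by
    have := hpart Set.univ MeasurableSet.univ
    simpa using this)
  obtain ⟨x, hx⟩ := aux_points S N m hmN
  have hN0 : (N : ℝ≥0∞) ≠ 0 := by exact_mod_cast hN
  have hNt : (N : ℝ≥0∞) ≠ ∞ := ENNReal.natCast_ne_top N
  let c : E → ℝ≥0∞ := fun s => (N : ℝ≥0∞)⁻¹ * m s / μ (g ⁻¹' {s})
  have hmle : ∀ s ∈ S, (N : ℝ≥0∞)⁻¹ * m s ≤ 2 * μ (g ⁻¹' {s}) := by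
    intro s hs
    calc (N : ℝ≥0∞)⁻¹ * m s ≤ (N : ℝ≥0∞)⁻¹ * (2 * N * μ (g ⁻¹' {s})) := by
          gcongr; exact hm s hs
      _ = ((N : ℝ≥0∞)⁻¹ * N) * (2 * μ (g ⁻¹' {s})) := by ring
      _ = _ := by rw [ENNReal.inv_mul_cancel hN0 hNt, one_mul]
  have hc2 : ∀ s ∈ S, c s ≤ 2 := fun s hs => ENNReal.div_le_of_le_mul (hmle s hs)
  have hcm : ∀ s ∈ S, c s * μ (g ⁻¹' {s}) = (N : ℝ≥0∞)⁻¹ * m s := by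
    intro s hs
    by_cases h0 : μ (g ⁻¹' {s}) = 0
    · have := hmle s hs
      rw [h0, mul_zero] at this
      rw [h0, mul_zero]
      exact (le_antisymm this zero_le).symm
    · exact ENNReal.div_mul_cancel h0 (measure_ne_top _ _)
  let lam : Measure E := ∑ s ∈ S, c s • μ.restrict (g ⁻¹' {s})
  let rho : Measure E := ∑ s ∈ S, (2 - c s) • μ.restrict (g ⁻¹' {s})
  have hlam : ∀ B, MeasurableSet B → lam B = ∑ s ∈ S, c s * μ (B ∩ g ⁻¹' {s}) := by
    intro B hB
    simp only [lam, Measure.finsetSum_apply, Measure.smul_apply, smul_eq_mul,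
      Measure.restrict_apply hB]
  have hsum : lam + rho = (2 : ℝ≥0∞) • μ := by
    ext B hB
    simp only [lam, rho, Measure.add_apply, Measure.finsetSum_apply, Measure.smul_apply,
      smul_eq_mul, Measure.restrict_apply hB]
    rw [← Finset.sum_add_distrib, ← hpart B hB, Finset.mul_sum]
    refine Finset.sum_congr rfl fun s hs => ?_
    rw [← add_mul, add_tsub_cancel_of_le (hc2 s hs)]
  have hl1 : lam Set.univ = 1 := by
    rw [hlam _ MeasurableSet.univ]
    simp only [Set.univ_inter]
    rw [Finset.sum_congr rfl hcm, ← Finset.mul_sum, ← Nat.cast_sum, hmN,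
      ENNReal.inv_mul_cancel hN0 hNt]
  have hr1 : rho Set.univ = 1 := by
    have h := congrArg (fun ν : Measure E => ν Set.univ) hsum
    simp only [Measure.add_apply, Measure.smul_apply, smul_eq_mul, hl1, measure_univ,
      mul_one] at h
    rw [← one_add_one_eq_two] at h
    exact (ENNReal.add_right_inj ENNReal.one_ne_top).1 h
  refine ⟨lam, rho, ⟨hl1⟩, ⟨hr1⟩, ?_, x, ?_⟩
  · rw [← smul_add, hsum, smul_smul, ENNReal.inv_mul_cancel (by simp) (by simp), one_smul]
  · rw [empiricalMeasure, hx]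
    ext B hB
    rw [Measure.map_apply hT hB, hlam _ (hT hB)]
    simp only [Measure.smul_apply, Measure.finsetSum_apply, smul_eq_mul, Finset.mul_sum]
    refine Finset.sum_congr rfl fun s hs => ?_
    rw [Measure.dirac_apply' _ hB]
    by_cases hsB : s ∈ B
    · have : T ⁻¹' B ∩ g ⁻¹' {s} = g ⁻¹' {s} := by
        refine Set.inter_eq_right.2 fun y hy => ?_
        have hy' : g y = s := hy
        exact (hgT y B hB).2 (hy' ▸ hsB)
      rw [this, hcm s hs]
      simp [hsB]
    · have : T ⁻¹' B ∩ g ⁻¹' {s} = ∅ := by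
        refine Set.eq_empty_of_forall_notMem ?_
        rintro y ⟨hy1, hy⟩
        have hy' : g y = s := hy
        exact hsB (hy' ▸ (hgT y B hB).1 hy1)
      rw [this]
      simp [hsB]

/-- **Lemma (advdecomp).** Let `k ∈ ℕ ∪ {0}` and let `E` be a measurable space. For
each `0 ≤ j ≤ k`, let `T_j : E → E` be a measurable map whose range contains at most
`2^j` points. Then every probability measure `μ` on `E` can be decomposed as
`μ = (1/2^k) λ⁽⁰⁾ + ∑_{j=1}^{k} (1/2^{k−j+1}) λ⁽ʲ⁾` for some probability measures
`λ⁽⁰⁾, …, λ⁽ᵏ⁾` on `E` such that `(T_j)_# λ⁽ʲ⁾ ∈ 𝒰(E, 2^j)` for every `0 ≤ j ≤ k`. -/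
theorem stmt_19 {E : Type*} [MeasurableSpace E] (k : ℕ)
    (T : ℕ → E → E) (hTmeas : ∀ j ≤ k, Measurable (T j))
    (hTfin : ∀ j ≤ k, (Set.range (T j)).Finite)
    (hTcard : ∀ j ≤ k, (Set.range (T j)).ncard ≤ 2 ^ j)
    (μ : Measure E) [IsProbabilityMeasure μ] :
    ∃ lam : ℕ → Measure E,
      (∀ j ≤ k, IsProbabilityMeasure (lam j)) ∧
      μ = ((2 : ℝ≥0∞) ^ k)⁻¹ • lam 0 +
            ∑ j ∈ Finset.Icc 1 k, ((2 : ℝ≥0∞) ^ (k - j + 1))⁻¹ • lam j ∧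
      ∀ j ≤ k, ∃ x : Fin (2 ^ j) → E, (lam j).map (T j) = empiricalMeasure (2 ^ j) x := by
  induction k generalizing μ with
  | zero =>
    refine ⟨fun _ => μ, fun _ _ => inferInstance, by simp, ?_⟩
    intro j hj
    obtain rfl : j = 0 := by omega
    obtain ⟨x0⟩ : Nonempty E := nonempty_of_isProbabilityMeasure μ
    have hconst : T 0 = fun _ => T 0 x0 := by
      funext y
      have h := hTcard 0 le_rfl
      rw [pow_zero, Set.ncard_le_one (hTfin 0 le_rfl)] at h
      exact h _ ⟨y, rfl⟩ _ ⟨x0, rfl⟩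
    refine ⟨fun _ => T 0 x0, ?_⟩
    rw [hconst, Measure.map_const]
    simp [empiricalMeasure]
  | succ k ih =>
    obtain ⟨lam, rho, hl, hr, hμ, hx⟩ := aux_step (T (k + 1)) (hTmeas _ le_rfl) (2 ^ (k + 1))
      (by positivity) (hTfin _ le_rfl) (hTcard _ le_rfl) μ
    obtain ⟨L, hL1, hL2, hL3⟩ := ih (fun j hj => hTmeas j (by omega))
      (fun j hj => hTfin j (by omega)) (fun j hj => hTcard j (by omega)) rho
    refine ⟨Function.update L (k + 1) lam, ?_, ?_, ?_⟩
    · intro j hj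
      by_cases h : j = k + 1
      · subst h; simpa using hl
      · rw [Function.update_of_ne h]; exact hL1 j (by omega)
    · have hinv : ∀ n : ℕ, ((2 : ℝ≥0∞) ^ (n + 1))⁻¹ = 2⁻¹ * (2 ^ n)⁻¹ := by
        intro n
        rw [ENNReal.inv_pow, ENNReal.inv_pow, pow_succ, mul_comm]
      rw [Finset.sum_Icc_succ_top (by omega), Function.update_self,
        Function.update_of_ne (by omega), Finset.sum_congr rfl (g := fun j =>
          (2 : ℝ≥0∞)⁻¹ • (((2 : ℝ≥0∞) ^ (k - j + 1))⁻¹ • L j)), ← Finset.smul_sum,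
        hinv k, mul_smul, ← add_assoc, ← smul_add, ← hL2, hμ, add_comm]
      · simp
      · intro j hj
        rw [Finset.mem_Icc] at hj
        rw [Function.update_of_ne (by omega), smul_smul, ← hinv]
        congr 4
        omega
    · intro j hj
      by_cases h : j = k + 1
      · subst h; simpa using hx
      · rw [Function.update_of_ne h]; exact hL3 j (by omega)
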